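/- arXiv:2003.02871 — 2 statements merged into one kernel-verified Lean document; each statement's English description precedes it below -/
import Mathlib

section
/- Let U ⊆ ℝ² be an open set, let μ be a finite Borel measure on U, and let C > 0 be a constant such that C ∫_U u² dμ ≤ ∫_U |∇u|² dx for every Lipschitz function u : U → ℝ with compact support in U. Then for every Lipschitz function v : U → ℝ with compact support in U and |v| ≤ 1 everywhere, one has ∫_U |v| dμ ≤ (μ(U) + 1/C) (∫_U |∇v|² dx)^{1/3}. -/
open MeasureTheory
open scoped ENNReal NNReal

/-- If the finite Borel measure `μ` on the open set `U ⊆ ℝ²` has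
first Dirichlet eigenvalue at least `C > 0` (tested on compactly supported Lipschitz
functions), then every compactly supported Lipschitz `v` with `|v| ≤ 1` satisfies
`∫ |v| dμ ≤ (μ(U) + 1/C) (∫ |∇v|² dx)^{1/3}`. -/
theorem statement4 (U : Set (EuclideanSpace ℝ (Fin 2))) (hU : IsOpen U)
    (μ : Measure (EuclideanSpace ℝ (Fin 2))) [IsFiniteMeasure μ] (hμsupp : μ Uᶜ = 0)
    (C : ℝ) (hC : 0 < C)
    (heig : ∀ (u : EuclideanSpace ℝ (Fin 2) → ℝ) (K : ℝ≥0), LipschitzWith K u →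
      HasCompactSupport u → tsupport u ⊆ U →
      C * ∫ x in U, (u x) ^ 2 ∂μ ≤ ∫ x in U, ‖fderiv ℝ u x‖ ^ 2)
    (v : EuclideanSpace ℝ (Fin 2) → ℝ) (K : ℝ≥0) (hv : LipschitzWith K v)
    (hvcs : HasCompactSupport v) (hvU : tsupport v ⊆ U) (hvb : ∀ x, |v x| ≤ 1) :
    ∫ x in U, |v x| ∂μ ≤
      ((μ U).toReal + 1 / C) * (∫ x in U, ‖fderiv ℝ v x‖ ^ 2) ^ ((1 : ℝ) / 3) := by
  have h1 := heig v K hv hvcs hvU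
  set A := ∫ x in U, ‖fderiv ℝ v x‖ ^ 2 with hA
  have hA0 : 0 ≤ A := integral_nonneg fun x => by positivity
  have hi : Integrable (fun x => |v x|) (μ.restrict U) :=
    ((hv.continuous.integrable_of_hasCompactSupport hvcs).abs).restrict
  have hi2 : Integrable (fun x => v x ^ 2) (μ.restrict U) := by
    refine Integrable.mono' hi (by have := hv.continuous; fun_prop) (Filter.Eventually.of_forall fun x => ?_)
    have h := hvb x
    rw [Real.norm_eq_abs, abs_pow]
    nlinarith [abs_nonneg (v x)]
  have hI : ∫ x in U, (v x) ^ 2 ∂μ ≤ A / C := by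
    rw [le_div_iff₀ hC]; linarith
  set t := A ^ ((1 : ℝ) / 3) with ht
  have ht0 : 0 ≤ t := Real.rpow_nonneg hA0 _
  have ht3 : t ^ 3 = A := by
    rw [ht, ← Real.rpow_natCast, ← Real.rpow_mul hA0]; norm_num
  have hm0 : 0 ≤ (μ U).toReal := ENNReal.toReal_nonneg
  have hC' : 0 ≤ 1 / C := by positivity
  have hconst : ∀ c : ℝ, ∫ _ in U, c ∂μ = c * (μ U).toReal := by
    intro c
    simp [Measure.real, mul_comm]
  rcases ht0.eq_or_lt with h0 | hpos
  · have hAz : A = 0 := by rw [← ht3, ← h0]; norm_num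
    have hz : ∫ x in U, (v x) ^ 2 ∂μ = 0 :=
      le_antisymm (by simpa [hAz] using hI) (integral_nonneg fun x => by positivity)
    rw [integral_eq_zero_iff_of_nonneg (fun x => by positivity) hi2] at hz
    have : ∫ x in U, |v x| ∂μ = 0 := by
      apply integral_eq_zero_of_ae
      filter_upwards [hz] with x hx
      simpa using hx
    rw [this, ← h0]; simp
  · rcases le_total t 1 with h | h
    · have hle : ∫ x in U, |v x| ∂μ ≤ ∫ x in U, (t + v x ^ 2 / t) ∂μ := by
        refine integral_mono hi ((integrable_const t).add (hi2.div_const t)) fun x => ?_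
        have : t + v x ^ 2 / t = (t ^ 2 + |v x| ^ 2) / t := by
          rw [sq_abs]; field_simp
        simp only [this]
        rw [le_div_iff₀ hpos]
        nlinarith [sq_nonneg (t - |v x|), abs_nonneg (v x)]
      rw [integral_add (integrable_const t) (hi2.div_const t), hconst, integral_div] at hle
      have h2 : (∫ x in U, (v x) ^ 2 ∂μ) / t ≤ 1 / C * t := by
        rw [div_le_iff₀ hpos]
        refine hI.trans ?_
        rw [← ht3, div_eq_mul_one_div, mul_comm, mul_assoc]
        apply mul_le_mul_of_nonneg_left _ hC'
        nlinarith [sq_nonneg t]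
      linarith
    · have hle : ∫ x in U, |v x| ∂μ ≤ ∫ _ in U, (1 : ℝ) ∂μ :=
        integral_mono hi (integrable_const _) fun x => hvb x
      rw [hconst] at hle
      nlinarith
end

section
/- Let A = {z ∈ ℝ² : 1 < |z| < 4} be the open annulus and let u : A → ℝ be harmonic on A with ∫_A |∇u|² dz < ∞. Suppose that for every ρ ∈ (1, 4) there exists a point z_ρ with |z_ρ| = ρ and u(z_ρ) = 0. Then for every x ∈ ℝ² with |x| = 2 one has u(x)² ≤ 64π ∫_A |∇u|² dz. -/
open MeasureTheory

/-- The Laplacian of a function on the plane, as the sum of its second partial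
derivatives in the coordinate directions. -/
noncomputable def planeLaplacian (u : EuclideanSpace ℝ (Fin 2) → ℝ)
    (x : EuclideanSpace ℝ (Fin 2)) : ℝ :=
  ∑ i : Fin 2,
    fderiv ℝ (fun y => fderiv ℝ u y (EuclideanSpace.single i 1)) x (EuclideanSpace.single i 1)

lemma aux_circle (f : ℂ → ℂ) (c : ℂ) (r : ℝ) (h0 : 0 < r) (h1 : r < 1)
    (hf : DifferentiableOn ℂ f (Metric.ball c 1)) :
    ENNReal.ofReal (2 * Real.pi) * ‖f c‖ₑ ≤
      ∫⁻ θ in Set.Ioo (-Real.pi) Real.pi, ‖f (circleMap c r θ)‖ₑ := by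
  have hd : DiffContOnCl ℂ f (Metric.ball c |r|) := by
    apply DifferentiableOn.diffContOnCl_ball (U := Metric.ball c 1) hf
    apply Metric.closedBall_subset_ball
    rwa [abs_of_pos h0]
  have h := hd.circleAverage
  rw [Real.circleAverage_eq_integral_add (-Real.pi)] at h
  rw [intervalIntegral.integral_comp_add_right (fun θ => f (circleMap c r θ))] at h
  have e : 2 * Real.pi + -Real.pi = Real.pi := by ring
  rw [zero_add, e, inv_smul_eq_iff₀ (by positivity),
    intervalIntegral.integral_of_le (by linarith [Real.pi_pos]), ← setIntegral_congr_set Ioo_ae_eq_Ioc] at h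
  calc _ = ‖(2 * Real.pi) • f c‖ₑ := by
        rw [enorm_smul, Real.enorm_of_nonneg (by positivity)]
    _ ≤ _ := by
        rw [← h]; exact enorm_integral_le_lintegral_enorm _

lemma aux_area (f : ℂ → ℂ) (c : ℂ) (hf : DifferentiableOn ℂ f (Metric.ball c 1)) :
    ENNReal.ofReal Real.pi * ‖f c‖ₑ ≤ ∫⁻ z in Metric.ball c 1, ‖f z‖ₑ := by
  classical
  have hm : Measurable ((Metric.ball c 1).indicator (fun z => ‖f z‖ₑ)) := by
    have := ContinuousOn.measurable_piecewise (s := Metric.ball c 1) (f := fun z => ‖f z‖ₑ)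
      (g := fun _ => 0) (by exact continuous_enorm.comp_continuousOn hf.continuousOn) continuousOn_const Metric.isOpen_ball.measurableSet
    rw [← Set.piecewise_eq_indicator]
    exact this
  rw [← lintegral_indicator Metric.isOpen_ball.measurableSet]
  rw [← lintegral_add_left_eq_self _ c, ← Complex.lintegral_comp_polarCoord_symm]
  rw [polarCoord_target, Measure.volume_eq_prod, ← Measure.prod_restrict, lintegral_prod]
  · calc _ = ∫⁻ r in Set.Ioo (0:ℝ) 1, ENNReal.ofReal r * (ENNReal.ofReal (2 * Real.pi) * ‖f c‖ₑ) := by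
          rw [lintegral_mul_const _ (by fun_prop), ← ofReal_integral_eq_lintegral_ofReal,
            ← mul_assoc, ← setIntegral_congr_set Ioo_ae_eq_Ioc.symm,
            ← intervalIntegral.integral_of_le (by norm_num), integral_id, ← ENNReal.ofReal_mul (by norm_num)]
          · congr 2; ring
          · exact ((continuous_id.integrableOn_Icc (a := (0:ℝ)) (b := 1)).mono_set Set.Ioo_subset_Icc_self)
          · filter_upwards [ae_restrict_mem measurableSet_Ioo] with r hr using hr.1.le
      _ ≤ ∫⁻ r in Set.Ioo (0:ℝ) 1, ∫⁻ θ in Set.Ioo (-Real.pi) Real.pi, 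
            ENNReal.ofReal r * (Metric.ball c 1).indicator (fun z => ‖f z‖ₑ) (c + Complex.polarCoord.symm (r, θ)) := by
          apply setLIntegral_mono' measurableSet_Ioo
          intro r hr
          rw [lintegral_const_mul' _ _ ENNReal.ofReal_ne_top]
          gcongr
          refine (aux_circle f c r hr.1 hr.2 hf).trans (le_of_eq ?_)
          congr 1
          ext θ
          have : c + Complex.polarCoord.symm (r, θ) = circleMap c r θ := by
            simp [circleMap, Complex.exp_mul_I]
          rw [this, Set.indicator_of_mem]
          rw [Metric.mem_ball, dist_eq_norm, circleMap_sub_center, norm_circleMap_zero, abs_of_pos hr.1]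
          exact hr.2
      _ ≤ _ := by
          apply lintegral_mono_set
          exact fun r hr => hr.1
  · have h2 : Measurable (fun p : ℝ × ℝ => Complex.polarCoord.symm p) := by
      simp only [Complex.polarCoord_symm_apply]
      fun_prop
    apply Measurable.aemeasurable
    simp only [smul_eq_mul]
    apply Measurable.mul (by fun_prop)
    exact hm.comp (by fun_prop)

lemma aux_grad_le (L : ℂ →L[ℝ] ℝ) : ‖L‖ ≤ ‖((L 1 : ℝ) : ℂ) - Complex.I * (L Complex.I : ℝ)‖ := by
  refine L.opNorm_le_bound (norm_nonneg _) fun h => ?_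
  have : L h = ((((L 1 : ℝ) : ℂ) - Complex.I * (L Complex.I : ℝ)) * h).re := by
    have hh : h = h.re • (1:ℂ) + h.im • Complex.I := by
      apply Complex.ext <;> simp
    conv_lhs => rw [hh, map_add, map_smul, map_smul]
    simp
    ring
  rw [this, ← norm_mul]
  exact Complex.abs_re_le_norm _

lemma aux_le_grad (L : ℂ →L[ℝ] ℝ) : ‖((L 1 : ℝ) : ℂ) - Complex.I * (L Complex.I : ℝ)‖ ≤ ‖L‖ := by
  set F : ℂ := ((L 1 : ℝ) : ℂ) - Complex.I * (L Complex.I : ℝ) with hF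
  have h2 : ‖F‖ ^ 2 = L 1 ^ 2 + L Complex.I ^ 2 := by
    rw [← Complex.normSq_eq_norm_sq, Complex.normSq_apply]; simp [hF]; ring
  have h1 : L (L 1 • (1:ℂ) + L Complex.I • Complex.I) = ‖F‖ ^ 2 := by
    rw [map_add, map_smul, map_smul, h2]; simp; ring
  have h3 : ‖L 1 • (1:ℂ) + L Complex.I • Complex.I‖ = ‖F‖ := by
    rw [← sq_eq_sq₀ (norm_nonneg _) (norm_nonneg _), h2, ← Complex.normSq_eq_norm_sq,
      Complex.normSq_apply]; simp; ring
  have h4 := L.le_opNorm (L 1 • (1:ℂ) + L Complex.I • Complex.I)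
  rw [h1, h3, Real.norm_of_nonneg (by positivity)] at h4
  rcases (norm_nonneg F).eq_or_lt with h | h
  · rw [← h]; exact norm_nonneg _
  · nlinarith

lemma aux_complex (v : ℂ → ℝ)
    (hv : InnerProductSpace.HarmonicOnNhd v {z : ℂ | 1 < ‖z‖ ∧ ‖z‖ < 4})
    (hgrad : IntegrableOn (fun z => ‖fderiv ℝ v z‖ ^ 2) {z : ℂ | 1 < ‖z‖ ∧ ‖z‖ < 4})
    (w : ℂ) (hw : ‖w‖ = 2) (hw0 : v w = 0) (x : ℂ) (hx : ‖x‖ = 2) :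
    v x ^ 2 ≤ 64 * Real.pi * ∫ z in {z : ℂ | 1 < ‖z‖ ∧ ‖z‖ < 4}, ‖fderiv ℝ v z‖ ^ 2 := by
  set A : Set ℂ := {z : ℂ | 1 < ‖z‖ ∧ ‖z‖ < 4} with hA
  set E := ∫ z in A, ‖fderiv ℝ v z‖ ^ 2 with hE
  have hE0 : 0 ≤ E := integral_nonneg fun z => by positivity
  set F : ℂ → ℂ := fun z => ((fderiv ℝ v z 1 : ℝ) : ℂ) - Complex.I * (fderiv ℝ v z Complex.I : ℝ) with hF
  have key : ∀ c : ℂ, ‖c‖ = 2 → ‖fderiv ℝ v c‖ ≤ √(E / Real.pi) := by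
    intro c hc
    have hsub : Metric.ball c 1 ⊆ A := by
      intro z hz
      rw [Metric.mem_ball, dist_eq_norm] at hz
      have a1 := norm_sub_norm_le c z
      have a2 := norm_sub_norm_le z c
      rw [norm_sub_rev] at a1
      exact ⟨by linarith, by linarith⟩
    have hd : DifferentiableOn ℂ (fun z => F z ^ 2) (Metric.ball c 1) := fun z hz =>
      ((HarmonicAt.differentiableAt_complex_partial (hv z (hsub hz))).pow 2).differentiableWithinAt
    have h1 := aux_area _ c hd
    have h2 : ∫⁻ z in Metric.ball c 1, ‖F z ^ 2‖ₑ ≤ ENNReal.ofReal E := by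
      rw [hE, ofReal_integral_eq_lintegral_ofReal hgrad (Filter.Eventually.of_forall fun z => by positivity)]
      refine (lintegral_mono_set hsub).trans (lintegral_mono fun z => ?_)
      rw [← ofReal_norm, norm_pow]
      exact ENNReal.ofReal_le_ofReal (pow_le_pow_left₀ (norm_nonneg _) (aux_le_grad _) 2)
    have h3 := h1.trans h2
    rw [← ofReal_norm, ← ENNReal.ofReal_mul Real.pi_pos.le, ENNReal.ofReal_le_ofReal_iff hE0, norm_pow] at h3
    refine (aux_grad_le _).trans (Real.le_sqrt_of_sq_le ?_)
    rw [le_div_iff₀ Real.pi_pos]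
    linarith
  set M := √(E / Real.pi) with hM
  have hcirc : ∀ y : ℂ, ‖y‖ = 2 → circleMap 0 2 y.arg = y := by
    intro y hy
    have := Complex.norm_mul_exp_arg_mul_I y
    simpa [circleMap, hy] using this
  have hder : ∀ θ : ℝ, HasDerivAt (fun θ => v (circleMap 0 2 θ))
      (fderiv ℝ v (circleMap 0 2 θ) (circleMap 0 2 θ * Complex.I)) θ := by
    intro θ
    have hmem : circleMap 0 2 θ ∈ A := by
      simp [hA]; norm_num
    have := ((hv _ hmem).1.differentiableAt (by norm_num)).hasFDerivAt
    exact this.comp_hasDerivAt θ (hasDerivAt_circleMap 0 2 θ)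
  have hb := Convex.norm_image_sub_le_of_norm_hasDerivWithin_le (C := M * 2) (s := Set.univ)
    (x := w.arg) (y := x.arg) (fun θ _ => (hder θ).hasDerivWithinAt)
    (fun θ _ => by
      refine (ContinuousLinearMap.le_opNorm _ _).trans ?_
      have : ‖circleMap 0 2 θ * Complex.I‖ = 2 := by simp
      rw [this]
      exact mul_le_mul_of_nonneg_right (key _ (by simp)) (by norm_num)) convex_univ trivial trivial
  simp only [hcirc x hx, hcirc w hw, hw0, sub_zero] at hb
  have hM0 : 0 ≤ M := Real.sqrt_nonneg _
  have harg : ‖x.arg - w.arg‖ ≤ 2 * Real.pi := by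
    rw [Real.norm_eq_abs, abs_le]
    have := Complex.arg_le_pi x
    have := Complex.arg_le_pi w
    have := Complex.neg_pi_lt_arg x
    have := Complex.neg_pi_lt_arg w
    constructor <;> linarith
  have hb2 : ‖v x‖ ≤ M * 2 * (2 * Real.pi) := hb.trans (by gcongr)
  have hM2 : M ^ 2 = E / Real.pi := Real.sq_sqrt (by positivity)
  calc v x ^ 2 = ‖v x‖ ^ 2 := by simp
    _ ≤ (M * 2 * (2 * Real.pi)) ^ 2 := by gcongr
    _ = 16 * Real.pi * E := by
        rw [mul_pow, mul_pow, hM2]; field_simp; ring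
    _ ≤ _ := by gcongr; norm_num

lemma aux_laplacian (u : EuclideanSpace ℝ (Fin 2) → ℝ) (x : ℂ)
    (hu : ContDiffAt ℝ 2 u (Complex.orthonormalBasisOneI.repr x)) :
    Laplacian.laplacian (u ∘ Complex.orthonormalBasisOneI.repr) x =
      planeLaplacian u (Complex.orthonormalBasisOneI.repr x) := by
  have hd : DifferentiableAt ℝ (fderiv ℝ u) (Complex.orthonormalBasisOneI.repr x) :=
    (hu.fderiv_right (m := 1) (by norm_num)).differentiableAt (by norm_num)
  rw [InnerProductSpace.laplacian_eq_iteratedFDeriv_orthonormalBasis _ Complex.orthonormalBasisOneI]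
  unfold planeLaplacian
  refine Finset.sum_congr rfl fun i _ => ?_
  have h := ContinuousLinearEquiv.iteratedFDerivWithin_comp_right
    (Complex.orthonormalBasisOneI.repr.toContinuousLinearEquiv) u uniqueDiffOn_univ
    (x := x) (Set.mem_univ _) 2
  simp only [Set.preimage_univ, iteratedFDerivWithin_univ] at h
  have h' := congrArg (fun T => T ![Complex.orthonormalBasisOneI i, Complex.orthonormalBasisOneI i]) h
  refine h'.trans ?_
  simp only [ContinuousMultilinearMap.compContinuousLinearMap_apply]
  rw [iteratedFDeriv_two_apply]
  have hs : Complex.orthonormalBasisOneI.repr (Complex.orthonormalBasisOneI i) = EuclideanSpace.single i 1 :=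
    Complex.orthonormalBasisOneI.repr_self i
  rw [fderiv_clm_apply (by exact hd) (by fun_prop)]
  simp [-Complex.coe_orthonormalBasisOneI, hs]

/-- A harmonic function of finite Dirichlet energy on the annulus
`1 < |z| < 4` which vanishes somewhere on every concentric circle satisfies the
pointwise bound `u(x)² ≤ 64π ∫_A |∇u|²` on the middle circle `|x| = 2`. -/
theorem statement12 (u : EuclideanSpace ℝ (Fin 2) → ℝ)
    (hu : ContDiffOn ℝ 2 u {z : EuclideanSpace ℝ (Fin 2) | 1 < ‖z‖ ∧ ‖z‖ < 4})
    (hharm : ∀ z ∈ {z : EuclideanSpace ℝ (Fin 2) | 1 < ‖z‖ ∧ ‖z‖ < 4}, planeLaplacian u z = 0)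
    (hgrad : IntegrableOn (fun z => ‖fderiv ℝ u z‖ ^ 2)
      {z : EuclideanSpace ℝ (Fin 2) | 1 < ‖z‖ ∧ ‖z‖ < 4})
    (hzero : ∀ ρ ∈ Set.Ioo (1 : ℝ) 4, ∃ z : EuclideanSpace ℝ (Fin 2), ‖z‖ = ρ ∧ u z = 0) :
    ∀ x : EuclideanSpace ℝ (Fin 2), ‖x‖ = 2 →
      (u x) ^ 2 ≤ 64 * Real.pi *
        ∫ z in {z : EuclideanSpace ℝ (Fin 2) | 1 < ‖z‖ ∧ ‖z‖ < 4}, ‖fderiv ℝ u z‖ ^ 2 := by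
  intro x hx
  set e := Complex.orthonormalBasisOneI.repr with he
  have hopen : IsOpen {z : EuclideanSpace ℝ (Fin 2) | 1 < ‖z‖ ∧ ‖z‖ < 4} :=
    (isOpen_lt continuous_const continuous_norm).inter (isOpen_lt continuous_norm continuous_const)
  have hpre : e ⁻¹' {z : EuclideanSpace ℝ (Fin 2) | 1 < ‖z‖ ∧ ‖z‖ < 4} = {z : ℂ | 1 < ‖z‖ ∧ ‖z‖ < 4} := by
    ext z; simp
  have hopen' : IsOpen {z : ℂ | 1 < ‖z‖ ∧ ‖z‖ < 4} := hpre ▸ hopen.preimage e.continuous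
  have hcd : ∀ z ∈ {z : ℂ | 1 < ‖z‖ ∧ ‖z‖ < 4}, ContDiffAt ℝ 2 u (e z) := by
    intro z hz
    rw [← hpre] at hz
    exact hu.contDiffAt (hopen.mem_nhds hz)
  have hharm' : InnerProductSpace.HarmonicOnNhd (u ∘ e) {z : ℂ | 1 < ‖z‖ ∧ ‖z‖ < 4} := by
    intro z hz
    refine ⟨(hcd z hz).comp z e.contDiff.contDiffAt, ?_⟩
    filter_upwards [hopen'.mem_nhds hz] with y hy
    rw [aux_laplacian u y (hcd y hy)]
    have hy' : y ∈ e ⁻¹' {z : EuclideanSpace ℝ (Fin 2) | 1 < ‖z‖ ∧ ‖z‖ < 4} := by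
      rw [hpre]; exact hy
    exact hharm _ hy'
  have hfd : (fun z => ‖fderiv ℝ (u ∘ e) z‖ ^ 2) = (fun z => ‖fderiv ℝ u z‖ ^ 2) ∘ e := by
    ext z
    have h := e.norm_iteratedFDeriv_comp_right u z 1
    rw [norm_iteratedFDeriv_one, norm_iteratedFDeriv_one] at h
    simp only [h, Function.comp]
  have hmp := e.measurePreserving
  have hme : MeasurableEmbedding e := e.toHomeomorph.measurableEmbedding
  have hint : ∫ z in {z : ℂ | 1 < ‖z‖ ∧ ‖z‖ < 4}, ‖fderiv ℝ (u ∘ e) z‖ ^ 2 =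
      ∫ z in {z : EuclideanSpace ℝ (Fin 2) | 1 < ‖z‖ ∧ ‖z‖ < 4}, ‖fderiv ℝ u z‖ ^ 2 := by
    rw [hfd, ← hpre]
    exact hmp.setIntegral_preimage_emb hme (fun z => ‖fderiv ℝ u z‖ ^ 2) {z | 1 < ‖z‖ ∧ ‖z‖ < 4}
  obtain ⟨w, hw, hw0⟩ := hzero 2 (by norm_num)
  have := aux_complex (u ∘ e) hharm' (by
    rw [hfd, ← hpre]
    exact (hmp.integrableOn_comp_preimage hme).2 hgrad) (e.symm w) (by simpa using hw) (by simpa using hw0)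
    (e.symm x) (by simpa using hx)
  rw [hint] at this
  simpa using this
end
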